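/- Let R ⊆ K be a subring with c(R) = R, and let b, b′ be ℤ-submodules of K satisfying R·b ⊆ b, R·b′ ⊆ b′, b·b′ = R, and c(b) = b. If the dual of R satisfies R* = b^{2k} for some integer k ≥ 0 (where b^{2k} denotes the 2k-fold product of b with itself, with b^0 = R), then b^k is self-dual: (b^k)* = b^k. -/

import Mathlib

/-- The dual lattice `M* = {x ∈ K : Tr_{K/ℚ}(λ·x·c(y)) ∈ ℤ for all y ∈ M}` of a
`ℤ`-submodule `M` of a number field `K`, with respect to the pairing
`(x, y) ↦ Tr_{K/ℚ}(λ·x·c(y))`. -/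
noncomputable def dualLattice (K : Type*) [Field K] [Algebra ℚ K] [FiniteDimensional ℚ K]
    (c : K →ₐ[ℚ] K) (lam : K) (M : Submodule ℤ K) : Submodule ℤ K :=
  ⨅ y ∈ M, Submodule.comap
    (((Algebra.trace ℚ K).restrictScalars ℤ) ∘ₗ LinearMap.mulLeft ℤ (lam * c y))
    (Submodule.span ℤ {(1 : ℚ)})

/-!
The dual of a product is a colon ideal: `(M * N)* = (M* : c(N))`, because the pairing moves a factor
`n ∈ N` of the right argument to the factor `c(n)` of the left one. Hence
`(b^m)* = (R* : b^m) = (b^(m+n) : b^m)`, and an invertible `b^m` cancels, leaving `b^n`.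
-/

theorem submodule_mul_div_cancel_right_of_one_le {A B : Type*} [CommSemiring A] [CommSemiring B]
    [Algebra A B] {M N N' : Submodule A B} (hone : 1 ≤ N * N') (hM : M * (N * N') ≤ M) :
    M * N / N = M := by
  refine le_antisymm ?_ (Submodule.le_div_iff_mul_le.mpr le_rfl)
  calc M * N / N ≤ M * N / N * (N * N') := le_mul_of_one_le_right' hone
    _ = M * N / N * N * N' := (mul_assoc _ _ _).symm
    _ ≤ M * N * N' := mul_le_mul_left (Submodule.le_div_iff_mul_le.mp le_rfl) _
    _ = M * (N * N') := mul_assoc _ _ _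
    _ ≤ M := hM

section DualLattice

variable {K : Type*} [Field K] [Algebra ℚ K] [FiniteDimensional ℚ K]
  {c : K →ₐ[ℚ] K} {lam : K}

theorem mem_dualLattice {M : Submodule ℤ K} {x : K} :
    x ∈ dualLattice K c lam M ↔
      ∀ y ∈ M, Algebra.trace ℚ K (lam * c y * x) ∈ Submodule.span ℤ {(1 : ℚ)} := by
  simp only [dualLattice, Submodule.mem_iInf, Submodule.mem_comap, LinearMap.comp_apply,
    LinearMap.restrictScalars_apply, LinearMap.mulLeft_apply]

theorem mem_dualLattice_mul {M N : Submodule ℤ K} {x : K} :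
    x ∈ dualLattice K c lam (M * N) ↔
      ∀ m ∈ M, ∀ n ∈ N,
        Algebra.trace ℚ K (lam * c (m * n) * x) ∈ Submodule.span ℤ {(1 : ℚ)} :=
  mem_dualLattice.trans <| Submodule.mul_le (P := (Submodule.span ℤ {(1 : ℚ)}).comap <|
    (Algebra.trace ℚ K).restrictScalars ℤ ∘ₗ LinearMap.mulRight ℤ x ∘ₗ
      LinearMap.mulLeft ℤ lam ∘ₗ c.toLinearMap.restrictScalars ℤ)

theorem dualLattice_mul (M N : Submodule ℤ K) :
    dualLattice K c lam (M * N) =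
      dualLattice K c lam M / N.map (c.toLinearMap.restrictScalars ℤ) := by
  ext x
  have pairing_mul (m n : K) : lam * c (m * n) * x = lam * c m * (x * c n) := by
    rw [map_mul]
    ring
  rw [mem_dualLattice_mul]
  simp only [pairing_mul, Submodule.mem_div_iff_forall_mul_mem, Submodule.mem_map,
    forall_exists_index, and_imp, forall_apply_eq_imp_iff₂, mem_dualLattice,
    LinearMap.restrictScalars_apply, AlgHom.toLinearMap_apply]
  exact ⟨fun h n hn m hm => h m hm n hn, fun h m hm n hn => h n hn m hm⟩

theorem stmt9_general {R b b' : Submodule ℤ K} (hR1 : (1 : K) ∈ R) (hRmul : R * R ≤ R)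
    (hbb' : b * b' = R) (hcb : b.map (c.toLinearMap.restrictScalars ℤ) = b) {m n : ℕ}
    (hdualR : dualLattice K c lam R = R * b ^ (n + m)) :
    dualLattice K c lam (R * b ^ m) = R * b ^ n := by
  have one_le_R : 1 ≤ R := Submodule.one_le.mpr hR1
  have R_idem : IsIdempotentElem R := hRmul.antisymm (le_mul_of_one_le_right' one_le_R)
  have map_pow_b : (b ^ m).map (c.toLinearMap.restrictScalars ℤ) = b ^ m :=
    (Submodule.map_pow b (c.restrictScalars ℤ) m).trans (congrArg (· ^ m) hcb)
  have pow_mul_pow : b ^ m * b' ^ m = R ^ m := by rw [← mul_pow, hbb']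
  have R_absorbs : R * b ^ n * R ^ m = R * b ^ n := by
    rw [mul_right_comm, ← pow_succ', R_idem.pow_succ_eq]
  calc dualLattice K c lam (R * b ^ m)
      = R * b ^ (n + m) / b ^ m := by rw [dualLattice_mul, hdualR, map_pow_b]
    _ = R * b ^ n * b ^ m / b ^ m := by rw [pow_add, mul_assoc]
    _ = R * b ^ n := submodule_mul_div_cancel_right_of_one_le
        (pow_mul_pow ▸ one_le_pow_of_one_le' one_le_R m) (pow_mul_pow ▸ R_absorbs.le)

end DualLattice

/-- Let `K` be a number field, `c` a `ℚ`-algebra involution of `K`,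
`λ ∈ K` nonzero.  Let `R ⊆ K` be a subring with `c(R) = R`, and `b, b′` `ℤ`-submodules
with `R·b ⊆ b`, `R·b′ ⊆ b′`, `b·b′ = R`, `c(b) = b`.  If `R* = b^{2k}` for some `k ≥ 0`
(powers taken with the convention `b⁰ = R`, encoded as `R * b ^ n`), then `b^k` is
self-dual: `(b^k)* = b^k`. -/
theorem stmt9 (K : Type*) [Field K] [NumberField K]
    (c : K →ₐ[ℚ] K) (hc : ∀ x : K, c (c x) = x) (lam : K) (hlam : lam ≠ 0)
    (R : Submodule ℤ K) (hR1 : (1 : K) ∈ R) (hRmul : R * R ≤ R)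
    (hcR : R.map (c.toLinearMap.restrictScalars ℤ) = R)
    (b b' : Submodule ℤ K)
    (hRb : R * b ≤ b) (hRb' : R * b' ≤ b')
    (hbb' : b * b' = R)
    (hcb : b.map (c.toLinearMap.restrictScalars ℤ) = b)
    (kk : ℕ)
    (hdualR : dualLattice K c lam R = R * b ^ (2 * kk)) :
    dualLattice K c lam (R * b ^ kk) = R * b ^ kk := by
  exact stmt9_general hR1 hRmul hbb' hcb (two_mul kk ▸ hdualR)
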